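/- Let n ≥ 1, let λ : Fin n → ℝ satisfy λ_j > 0 for all j, and let a : Fin n → Fin n → ℝ be symmetric, i.e. a_{ij} = a_{ji} for all i, j. Then ∑_{i,j} a_{ij}² / λ_j ≥ (∑_j a_{jj})² / (∑_j λ_j). (This is the key pointwise inequality ∑_{i,j} b^{jj} h_{ij;k}² ≥ H_{;k}²/H, with λ_j the principal curvatures and a_{ij} = h_{ij;k}, used in proving that the constrained mean curvature flow preserves convexity.) -/

import Mathlib

open Finset

/-- The key pointwise inequality `∑_{i,j} b^{jj} h_{ij;k}² ≥ H_{;k}²/H` used in the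
convexity-preserving argument: for positive `λ_j` and a symmetric matrix `a`,
`∑_{i,j} a_{ij}²/λ_j ≥ (∑_j a_{jj})² / (∑_j λ_j)`. -/
theorem stmt_4 (n : ℕ) (hn : 1 ≤ n) (lam : Fin n → ℝ) (hlam : ∀ j, 0 < lam j)
    (a : Fin n → Fin n → ℝ) (hsymm : ∀ i j, a i j = a j i) :
    ∑ i, ∑ j, (a i j) ^ 2 / lam j ≥ (∑ j, a j j) ^ 2 / (∑ j, lam j) := by
  -- Titu's form of Cauchy–Schwarz bounds the right side by the diagonal terms of the left side;
  -- the off-diagonal terms are nonnegative.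
  refine (sq_sum_div_le_sum_sq_div univ (fun j => a j j) fun j _ => hlam j).trans ?_
  refine sum_le_sum fun i _ => ?_
  exact single_le_sum (f := fun j => a i j ^ 2 / lam j)
    (fun j _ => div_nonneg (sq_nonneg _) (hlam j).le) (mem_univ i)
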